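/- Let p ≥ 5 be a prime. Then S(2, 3, p; −1) equals (−p² + 14p − 13)/(36p) if p ≡ 1 (mod 12), equals (−p² − 14p − 13)/(36p) if p ≡ 11 (mod 12), equals (−p² − 50p − 13)/(36p) if p ≡ 5 (mod 12), and equals (−p² + 50p − 13)/(36p) if p ≡ 7 (mod 12). -/

import Mathlib

open Real

/-- The Dedekind cosecant sum
`S(q,r,p;ε) = (1/p) ∑_{j=1}^{|p|−1} ε^j csc(jqπ/p) csc(jrπ/p)`. -/
noncomputable def cosecSum (q r p : ℤ) (ε : ℝ) : ℝ :=
  (1 / (p : ℝ)) * ∑ j ∈ Finset.Icc 1 (p.natAbs - 1),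
    ε ^ j * (1 / Real.sin ((j : ℝ) * (q : ℝ) * π / (p : ℝ))) *
      (1 / Real.sin ((j : ℝ) * (r : ℝ) * π / (p : ℝ)))

/-!
Replacing `j` by `2 j` (allowed because `p` is odd) removes the sign `(-1) ^ j`. With
`θ = π j / p` and `x = 2 θ`, partial fractions give
`1 / (sin 2x sin 3x) = 4/3 · sin 2x / sin 3x - sin x / sin 2x + 1/6 · cos x / sin² x`.

The first two quotients reduce to Dirichlet kernels: if `b (2 k + 1) ≡ a` modulo `p`, then
substituting `2 b j` for `j` turns `sin ((2 k + 1) θ) / sin θ` into `sin (a x) / sin (b x)`, and the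
kernel sums to `p - (2 k + 1)` over the nonzero `j` by orthogonality. The last quotient is a
combination of `1 / sin² θ` and `1 / sin² 2θ`, whose sums are both `(p² - 1) / 3`.
-/

open scoped NumberTheorySymbols

lemma sum_Ico_one_comp_mul_of_periodic {M : Type*} [AddCommMonoid M] {p u : ℕ} {f : ℕ → M}
    (hf : Function.Periodic f p) (hu : u.Coprime p) :
    ∑ j ∈ Finset.Ico 1 p, f (u * j) = ∑ j ∈ Finset.Ico 1 p, f j := by
  have hmaps : Set.MapsTo (fun j => u * j % p) (Finset.Ico 1 p) (Finset.Ico 1 p) := by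
    intro j hj
    simp only [Finset.coe_Ico, Set.mem_Ico] at hj ⊢
    refine ⟨Nat.one_le_iff_ne_zero.mpr fun h => ?_, Nat.mod_lt _ (by omega)⟩
    exact Nat.not_dvd_of_pos_of_lt hj.1 hj.2
      (hu.symm.dvd_of_dvd_mul_left (Nat.dvd_of_mod_eq_zero h))
  have hinj : Set.InjOn (fun j => u * j % p) (Finset.Ico 1 p) := by
    intro i hi j hj h
    simp only [Finset.coe_Ico, Set.mem_Ico] at hi hj
    exact (Nat.ModEq.cancel_left_of_coprime hu.symm h).eq_of_lt_of_lt hi.2 hj.2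
  exact Finset.sum_nbij _ hmaps hinj (Finset.surjOn_of_injOn_of_card_le _ hmaps hinj le_rfl)
    fun j _ => (hf.map_mod_nat _).symm

lemma jacobiSym_three_eq_one {a : ℤ} (h : a % 3 = 1) : J(a | 3) = 1 := by
  rw [jacobiSym.mod_left, Nat.cast_ofNat, h, jacobiSym.one_left]

lemma jacobiSym_three_eq_neg_one {a : ℤ} (h : a % 3 = 2) : J(a | 3) = -1 := by
  rw [jacobiSym.mod_left, Nat.cast_ofNat, h]
  norm_num

section Trigonometry

lemma sin_two_mul_add_one_mul_eq_sum_cos (k : ℕ) (x : ℝ) :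
    sin ((2 * k + 1) * x) =
      sin x * (1 + 2 * ∑ l ∈ Finset.range k, cos (2 * (l + 1 : ℕ) * x)) := by
  induction k with
  | zero => simp
  | succ k ih =>
    have hstep : sin ((2 * (k + 1 : ℕ) + 1) * x) - sin ((2 * k + 1) * x) =
        2 * sin x * cos (2 * (k + 1 : ℕ) * x) := by
      rw [sin_sub_sin]
      push_cast
      ring_nf
    rw [Finset.sum_range_succ]
    linear_combination hstep + ih

lemma sin_nat_mul_sq_eq_sum_sin (n : ℕ) (x : ℝ) :
    sin (n * x) ^ 2 = sin x * ∑ k ∈ Finset.range n, sin ((2 * k + 1) * x) := by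
  induction n with
  | zero => simp
  | succ n ih =>
    have hsin : sin ((2 * n + 1) * x) =
        2 * sin (n * x) * cos (n * x) * cos x + (2 * cos (n * x) ^ 2 - 1) * sin x := by
      rw [← sin_two_mul, ← cos_two_mul, ← sin_add]
      ring_nf
    rw [Finset.sum_range_succ, mul_add, ← ih, hsin, Nat.cast_succ, add_one_mul, sin_add]
    linear_combination sin (n * x) ^ 2 * sin_sq_add_cos_sq x -
      sin x ^ 2 * sin_sq_add_cos_sq (n * x)

lemma one_div_sin_two_mul_mul_sin_three_mul {x : ℝ} (h₂ : sin (2 * x) ≠ 0)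
    (h₃ : sin (3 * x) ≠ 0) :
    1 / (sin (2 * x) * sin (3 * x)) = 4 / 3 * (sin (2 * x) / sin (3 * x)) -
      sin x / sin (2 * x) + 1 / 6 * (cos x / sin x ^ 2) := by
  have hsin3 : sin (3 * x) = sin x * (4 * cos x ^ 2 - 1) := by
    rw [sin_three_mul]
    linear_combination -4 * sin x * sin_sq_add_cos_sq x
  rw [hsin3] at h₃ ⊢
  rw [sin_two_mul] at h₂ ⊢
  have hs : sin x ≠ 0 := left_ne_zero_of_mul h₃
  have hc : cos x ≠ 0 := right_ne_zero_of_mul h₂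
  have hc3 : 4 * cos x ^ 2 - 1 ≠ 0 := right_ne_zero_of_mul h₃
  generalize hd : 4 * cos x ^ 2 - 1 = d at hc3 ⊢
  field_simp
  rw [sin_sq, ← hd]
  ring

lemma cos_two_mul_div_sin_two_mul_sq {x : ℝ} (h : sin (2 * x) ≠ 0) :
    cos (2 * x) / sin (2 * x) ^ 2 = 1 / 2 * (1 / sin x ^ 2) - 1 / sin (2 * x) ^ 2 := by
  rw [sin_two_mul] at h ⊢
  have hs : sin x ≠ 0 := by rintro h₀; simp [h₀] at h
  have hc : cos x ≠ 0 := right_ne_zero_of_mul h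
  rw [cos_two_mul]
  field_simp

end Trigonometry

section DivisionPoints

variable {p : ℕ}

lemma sin_nat_mul_pi_mul_div_ne_zero {m j : ℕ} (hm : m.Coprime p) (hj : j ∈ Finset.Ico 1 p) :
    sin (m * (π * j / p)) ≠ 0 := by
  rw [Finset.mem_Ico] at hj
  have hp : (p : ℝ) ≠ 0 := by norm_cast; omega
  intro h
  obtain ⟨n, hn⟩ := sin_eq_zero_iff.mp h
  have hmul : (n * p : ℝ) = m * j := by
    field_simp at hn
    exact hn
  have hdvd : p ∣ m * j :=
    Int.natCast_dvd_natCast.mp (Dvd.intro_left n (by exact_mod_cast hmul))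
  exact Nat.not_dvd_of_pos_of_lt hj.1 hj.2 (hm.symm.dvd_of_dvd_mul_left hdvd)

lemma sin_pi_mul_div_ne_zero {j : ℕ} (hj : j ∈ Finset.Ico 1 p) : sin (π * j / p) ≠ 0 := by
  simpa using sin_nat_mul_pi_mul_div_ne_zero (Nat.coprime_one_left p) hj

lemma sum_range_cos_two_mul_eq_zero {k : ℕ} (hp : p ≠ 0) (hk : ¬ p ∣ k) :
    ∑ j ∈ Finset.range p, cos (2 * k * (π * j / p)) = 0 := by
  have hζ := Complex.isPrimitiveRoot_exp p hp
  have hgeom : ∑ j ∈ Finset.range p, (Complex.exp (2 * π * Complex.I / p) ^ k) ^ j = 0 := by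
    rw [geom_sum_eq (mt (hζ.dvd_of_pow_eq_one k) hk), pow_right_comm, hζ.pow_eq_one]
    simp
  have hcos (j : ℕ) : cos (2 * k * (π * j / p)) =
      ((Complex.exp (2 * π * Complex.I / p) ^ k) ^ j).re := by
    rw [← Complex.exp_nat_mul, ← Complex.exp_nat_mul, ← Complex.exp_ofReal_mul_I_re]
    push_cast
    ring_nf
  simp only [hcos, ← Complex.re_sum, hgeom, Complex.zero_re]

lemma sum_range_sin_nat_mul_sq {j : ℕ} (hj : j ∈ Finset.Ico 1 p) :
    ∑ n ∈ Finset.range p, sin (n * (π * j / p)) ^ 2 = p / 2 := by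
  rw [Finset.mem_Ico] at hj
  have hcos := sum_range_cos_two_mul_eq_zero (by omega) (Nat.not_dvd_of_pos_of_lt hj.1 hj.2)
  have hsq (n : ℕ) : sin (n * (π * j / p)) ^ 2 = 1 / 2 - cos (2 * j * (π * n / p)) / 2 := by
    rw [sin_sq_eq_half_sub]
    ring_nf
  simp only [hsq, Finset.sum_sub_distrib, ← Finset.sum_div, hcos]
  simp [div_eq_mul_inv]

lemma sum_sin_odd_mul_div_sin {k : ℕ} (hk : k < p) :
    ∑ j ∈ Finset.Ico 1 p, sin ((2 * k + 1) * (π * j / p)) / sin (π * j / p) =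
      p - (2 * k + 1) := by
  have hcos {l : ℕ} (hl : l ∈ Finset.range k) :
      ∑ j ∈ Finset.Ico 1 p, cos (2 * (l + 1 : ℕ) * (π * j / p)) = -1 := by
    have hlk := Finset.mem_range.mp hl
    have h := sum_range_cos_two_mul_eq_zero (p := p) (by omega)
      (Nat.not_dvd_of_pos_of_lt l.succ_pos (by omega))
    rw [Finset.range_eq_Ico, Finset.sum_eq_sum_Ico_succ_bot (by omega)] at h
    simp only [Nat.cast_zero, mul_zero, zero_div, cos_zero] at h
    linarith
  calc ∑ j ∈ Finset.Ico 1 p, sin ((2 * k + 1) * (π * j / p)) / sin (π * j / p)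
      = ∑ j ∈ Finset.Ico 1 p,
          (1 + 2 * ∑ l ∈ Finset.range k, cos (2 * (l + 1 : ℕ) * (π * j / p))) := by
        refine Finset.sum_congr rfl fun j hj => ?_
        rw [sin_two_mul_add_one_mul_eq_sum_cos,
          mul_div_cancel_left₀ _ (sin_pi_mul_div_ne_zero hj)]
    _ = (p - 1 : ℕ) + 2 * ∑ l ∈ Finset.range k, (-1 : ℝ) := by
        rw [Finset.sum_add_distrib, ← Finset.mul_sum, Finset.sum_comm,
          Finset.sum_congr rfl fun l hl => hcos hl]
        simp
    _ = p - (2 * k + 1) := by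
        rw [Nat.cast_pred (by omega), Finset.sum_const, Finset.card_range, nsmul_eq_mul]
        ring

lemma sum_sin_nat_mul_sq_div_sin_sq {n : ℕ} (hn : n ≤ p) :
    ∑ j ∈ Finset.Ico 1 p, sin (n * (π * j / p)) ^ 2 / sin (π * j / p) ^ 2 = n * (p - n) := by
  have hodd (n : ℕ) : ∑ k ∈ Finset.range n, ((p : ℝ) - (2 * k + 1)) = n * (p - n) := by
    induction n with
    | zero => simp
    | succ n ih => rw [Finset.sum_range_succ, ih]; push_cast; ring
  have hterm : ∀ j ∈ Finset.Ico 1 p, sin (n * (π * j / p)) ^ 2 / sin (π * j / p) ^ 2 =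
      ∑ k ∈ Finset.range n, sin ((2 * k + 1) * (π * j / p)) / sin (π * j / p) := by
    intro j hj
    rw [sin_nat_mul_sq_eq_sum_sin, sq, mul_div_mul_left _ _ (sin_pi_mul_div_ne_zero hj),
      Finset.sum_div]
  rw [Finset.sum_congr rfl hterm, Finset.sum_comm, ← hodd]
  exact Finset.sum_congr rfl fun k hk =>
    sum_sin_odd_mul_div_sin ((Finset.mem_range.mp hk).trans_le hn)

lemma sum_one_div_sin_sq (hp : p ≠ 0) :
    ∑ j ∈ Finset.Ico 1 p, 1 / sin (π * j / p) ^ 2 = ((p : ℝ) ^ 2 - 1) / 3 := by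
  have hpoly (m : ℕ) : ∑ n ∈ Finset.range m, (n : ℝ) * (p - n) =
      m * (m - 1) * (3 * p - 2 * m + 1) / 6 := by
    induction m with
    | zero => simp
    | succ m ih => rw [Finset.sum_range_succ, ih]; push_cast; ring
  -- Both sides are the double sum of `sin² (n θ) / sin² θ` over `n` and `θ = π j / p`.
  have hdouble : p / 2 * ∑ j ∈ Finset.Ico 1 p, 1 / sin (π * j / p) ^ 2 =
      ∑ n ∈ Finset.range p, (n : ℝ) * (p - n) := by
    calc p / 2 * ∑ j ∈ Finset.Ico 1 p, 1 / sin (π * j / p) ^ 2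
        = ∑ j ∈ Finset.Ico 1 p, ∑ n ∈ Finset.range p,
            sin (n * (π * j / p)) ^ 2 / sin (π * j / p) ^ 2 := by
          rw [Finset.mul_sum]
          refine Finset.sum_congr rfl fun j hj => ?_
          rw [← Finset.sum_div, sum_range_sin_nat_mul_sq hj, mul_one_div]
      _ = ∑ n ∈ Finset.range p, (n : ℝ) * (p - n) := by
          rw [Finset.sum_comm]
          exact Finset.sum_congr rfl fun n hn =>
            sum_sin_nat_mul_sq_div_sin_sq (Finset.mem_range.mp hn).le
  have hp' : (p : ℝ) ≠ 0 := Nat.cast_ne_zero.mpr hp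
  rw [hpoly] at hdouble
  apply mul_left_cancel₀ (div_ne_zero hp' two_ne_zero)
  linear_combination hdouble

lemma sum_cos_two_mul_div_sin_two_mul_sq (hp : Odd p) :
    ∑ j ∈ Finset.Ico 1 p, cos (2 * (π * j / p)) / sin (2 * (π * j / p)) ^ 2 =
      -((p : ℝ) ^ 2 - 1) / 6 := by
  have hp0 : (p : ℝ) ≠ 0 := Nat.cast_ne_zero.mpr hp.pos.ne'
  have hper : Function.Periodic (fun j : ℕ => 1 / sin (π * j / p) ^ 2) p := fun j => by
    simp only [Nat.cast_add, mul_add, add_div, mul_div_cancel_right₀ _ hp0, sin_add_pi, neg_sq]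
  have hdouble := sum_Ico_one_comp_mul_of_periodic hper hp.coprime_two_left
  have hterm : ∀ j ∈ Finset.Ico 1 p, cos (2 * (π * j / p)) / sin (2 * (π * j / p)) ^ 2 =
      1 / 2 * (1 / sin (π * j / p) ^ 2) - 1 / sin (π * (2 * j : ℕ) / p) ^ 2 := by
    intro j hj
    rw [cos_two_mul_div_sin_two_mul_sq
      (mod_cast sin_nat_mul_pi_mul_div_ne_zero hp.coprime_two_left hj)]
    push_cast
    ring_nf
  rw [Finset.sum_congr rfl hterm, Finset.sum_sub_distrib, ← Finset.mul_sum, hdouble,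
    sum_one_div_sin_sq hp.pos.ne']
  ring

lemma sum_sin_mul_div_sin_mul {a b k : ℕ} (hp : Odd p) (hb : b.Coprime p) (hk : k < p)
    (h : a ≡ b * (2 * k + 1) [MOD p]) :
    ∑ j ∈ Finset.Ico 1 p, sin (a * (2 * (π * j / p))) / sin (b * (2 * (π * j / p))) =
      p - (2 * k + 1) := by
  have hp0 : (p : ℝ) ≠ 0 := Nat.cast_ne_zero.mpr hp.pos.ne'
  have hper : Function.Periodic
      (fun j : ℕ => sin ((2 * k + 1) * (π * j / p)) / sin (π * j / p)) p := fun j => by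
    have hnum : (2 * k + 1) * (π * (j + p : ℕ) / p) =
        (2 * k + 1) * (π * j / p) + π + k * (2 * π) := by
      push_cast; field_simp; ring
    have hden : π * (j + p : ℕ) / p = π * j / p + π := by push_cast; field_simp
    beta_reduce
    rw [hnum, hden, sin_add_nat_mul_two_pi, sin_add_pi, sin_add_pi, neg_div_neg_eq]
  obtain ⟨n, hn⟩ := h.dvd
  have hnR : (b * (2 * k + 1) - a : ℝ) = p * n := by exact_mod_cast hn
  rw [← sum_sin_odd_mul_div_sin hk,
    ← sum_Ico_one_comp_mul_of_periodic hper (hp.coprime_two_left.mul_left hb)]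
  refine Finset.sum_congr rfl fun j _ => ?_
  have hnum : (2 * k + 1) * (π * (2 * b * j : ℕ) / p) =
      a * (2 * (π * j / p)) + (n * j : ℤ) * (2 * π) := by
    push_cast
    field_simp
    linear_combination j * hnR
  have hden : π * (2 * b * j : ℕ) / p = b * (2 * (π * j / p)) := by push_cast; ring
  rw [hnum, hden, sin_add_int_mul_two_pi]

lemma sum_sin_div_sin_two_mul (hp : Odd p) :
    ∑ j ∈ Finset.Ico 1 p, sin (2 * (π * j / p)) / sin (2 * (2 * (π * j / p))) =
      ((ZMod.χ₄ p : ℤ) * p - 1 : ℝ) / 2 := by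
  have hsum {k : ℕ} (hk : k < p) (h : 1 ≡ 2 * (2 * k + 1) [MOD p]) :=
    sum_sin_mul_div_sin_mul hp hp.coprime_two_left hk h
  simp only [Nat.cast_one, one_mul, Nat.cast_ofNat] at hsum
  obtain h4 | h4 := Nat.odd_mod_four_iff.mp (Nat.odd_iff.mp hp)
  · rw [ZMod.χ₄_nat_one_mod_four h4]
    obtain ⟨m, rfl⟩ : ∃ m, p = 4 * m + 1 := ⟨p / 4, by omega⟩
    rw [hsum (k := m) (by omega) (Nat.modEq_iff_dvd.mpr ⟨1, by push_cast; ring⟩)]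
    push_cast
    ring
  · rw [ZMod.χ₄_nat_three_mod_four h4]
    obtain ⟨m, rfl⟩ : ∃ m, p = 4 * m + 3 := ⟨p / 4, by omega⟩
    rw [hsum (k := 3 * m + 2) (by omega) (Nat.modEq_iff_dvd.mpr ⟨3, by push_cast; ring⟩)]
    push_cast
    ring

lemma sum_sin_two_mul_div_sin_three_mul (hp : Odd p) (hp3 : ¬ 3 ∣ p) :
    ∑ j ∈ Finset.Ico 1 p, sin (2 * (2 * (π * j / p))) / sin (3 * (2 * (π * j / p))) =
      2 * (J(p | 3) * p - 1 : ℝ) / 3 := by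
  have hsum {k : ℕ} (hk : k < p) (h : 2 ≡ 3 * (2 * k + 1) [MOD p]) :=
    sum_sin_mul_div_sin_mul hp ((Nat.Prime.coprime_iff_not_dvd Nat.prime_three).mpr hp3) hk h
  simp only [Nat.cast_ofNat] at hsum
  rw [Nat.odd_iff] at hp
  obtain h3 | h3 : p % 3 = 1 ∨ p % 3 = 2 := by omega
  · rw [jacobiSym_three_eq_one (by omega)]
    obtain ⟨m, rfl⟩ : ∃ m, p = 6 * m + 1 := ⟨p / 6, by omega⟩
    rw [hsum (k := m) (by omega) (Nat.modEq_iff_dvd.mpr ⟨1, by push_cast; ring⟩)]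
    push_cast
    ring
  · rw [jacobiSym_three_eq_neg_one (by omega)]
    obtain ⟨m, rfl⟩ : ∃ m, p = 6 * m + 5 := ⟨p / 6, by omega⟩
    rw [hsum (k := 5 * m + 4) (by omega) (Nat.modEq_iff_dvd.mpr ⟨5, by push_cast; ring⟩)]
    push_cast
    ring

end DivisionPoints

lemma cosecSum_neg_modulus (q r p : ℤ) (ε : ℝ) : cosecSum q r (-p) ε = -cosecSum q r p ε := by
  simp [cosecSum, div_neg, sin_neg]

lemma cosecSum_neg_one_of_odd {q r : ℤ} {p : ℕ} (hp : Odd p) (hqr : Odd (q + r)) :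
    cosecSum q r p (-1) = 1 / p * ∑ j ∈ Finset.Ico 1 p,
      1 / (sin (q * (2 * (π * j / p))) * sin (r * (2 * (π * j / p)))) := by
  have hp0 : (p : ℝ) ≠ 0 := Nat.cast_ne_zero.mpr hp.pos.ne'
  have hper : Function.Periodic (fun j : ℕ =>
      (-1) ^ j * (1 / sin (j * q * π / p)) * (1 / sin (j * r * π / p))) p := fun j => by
    have hshift (m : ℤ) : (j + p : ℕ) * m * π / p = j * m * π / p + m * π := by
      push_cast; field_simp
    have hsign : 1 / (-1 : ℝ) ^ q * (1 / (-1) ^ r) = -1 := by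
      rw [one_div_mul_one_div, ← zpow_add₀ (by norm_num), hqr.neg_one_zpow,
        one_div_neg_one_eq_neg_one]
    simp only [hshift, sin_add_int_mul_pi, pow_add, hp.neg_one_pow, ← one_div_mul_one_div]
    linear_combination
      -(-1) ^ j * (1 / sin (j * q * π / p)) * (1 / sin (j * r * π / p)) * hsign
  have hIcc : Finset.Icc 1 ((p : ℤ).natAbs - 1) = Finset.Ico 1 p := by
    ext j
    simp only [Int.natAbs_natCast, Finset.mem_Icc, Finset.mem_Ico]
    omega
  rw [cosecSum, hIcc, Int.cast_natCast,
    ← sum_Ico_one_comp_mul_of_periodic hper hp.coprime_two_left]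
  congr 1
  refine Finset.sum_congr rfl fun j _ => ?_
  rw [(even_two_mul j).neg_one_pow, one_mul, one_div_mul_one_div]
  push_cast
  ring_nf

lemma cosecSum_two_three_natCast {p : ℕ} (hp : Odd p) (hp3 : ¬ 3 ∣ p) :
    cosecSum 2 3 p (-1) =
      (-(p : ℝ) ^ 2 + (32 * J(p | 3) - 18 * (ZMod.χ₄ p : ℤ)) * p - 13) / (36 * p) := by
  have hp0 : (p : ℝ) ≠ 0 := Nat.cast_ne_zero.mpr hp.pos.ne'
  have hcop3 : Nat.Coprime 3 p := (Nat.Prime.coprime_iff_not_dvd Nat.prime_three).mpr hp3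
  have hterm : ∀ j ∈ Finset.Ico 1 p,
      1 / (sin ((2 : ℤ) * (2 * (π * j / p))) * sin ((3 : ℤ) * (2 * (π * j / p)))) =
        4 / 3 * (sin (2 * (2 * (π * j / p))) / sin (3 * (2 * (π * j / p)))) -
          sin (2 * (π * j / p)) / sin (2 * (2 * (π * j / p))) +
          1 / 6 * (cos (2 * (π * j / p)) / sin (2 * (π * j / p)) ^ 2) := by
    intro j hj
    have hne {m : ℕ} (hm : m.Coprime p) : sin (m * (2 * (π * j / p))) ≠ 0 := by
      simpa [mul_assoc] using sin_nat_mul_pi_mul_div_ne_zero (hm.mul_left hp.coprime_two_left) hj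
    exact_mod_cast one_div_sin_two_mul_mul_sin_three_mul
      (mod_cast hne hp.coprime_two_left) (mod_cast hne hcop3)
  rw [cosecSum_neg_one_of_odd hp (by decide), Finset.sum_congr rfl hterm,
    Finset.sum_add_distrib, Finset.sum_sub_distrib, ← Finset.mul_sum, ← Finset.mul_sum,
    sum_sin_two_mul_div_sin_three_mul hp hp3, sum_sin_div_sin_two_mul hp,
    sum_cos_two_mul_div_sin_two_mul_sq hp]
  field_simp
  ring

lemma cosecSum_two_three {p : ℤ} (hp : Odd p) (hp3 : ¬ 3 ∣ p) :
    cosecSum 2 3 p (-1) =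
      (-(p : ℝ) ^ 2 + (32 * J(p | 3) - 18 * (ZMod.χ₄ p : ℤ)) * p - 13) / (36 * p) := by
  obtain ⟨n, rfl | rfl⟩ := p.eq_nat_or_neg
  · exact_mod_cast cosecSum_two_three_natCast (mod_cast hp) (mod_cast hp3)
  · rw [odd_neg, Int.odd_coe_nat] at hp
    have hn3 : ¬ 3 ∣ n := by omega
    have hJ : J(-n | 3) = -J(n | 3) := by
      rw [jacobiSym.neg _ (by decide), ZMod.χ₄_nat_three_mod_four rfl, neg_one_mul]
    have hχ : ZMod.χ₄ (-n : ℤ) = -ZMod.χ₄ n := by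
      rw [Int.cast_neg, Int.cast_natCast, neg_eq_neg_one_mul, map_mul,
        show ZMod.χ₄ (-1) = -1 from rfl, neg_one_mul]
    rw [cosecSum_neg_modulus, cosecSum_two_three_natCast hp hn3, hJ, hχ]
    push_cast
    ring

theorem stmt_19_general (p : ℤ) :
    (p % 12 = 1 → cosecSum 2 3 p (-1) = (-(p : ℝ) ^ 2 + 14 * p - 13) / (36 * p)) ∧
    (p % 12 = 11 → cosecSum 2 3 p (-1) = (-(p : ℝ) ^ 2 - 14 * p - 13) / (36 * p)) ∧
    (p % 12 = 5 → cosecSum 2 3 p (-1) = (-(p : ℝ) ^ 2 - 50 * p - 13) / (36 * p)) ∧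
    (p % 12 = 7 → cosecSum 2 3 p (-1) = (-(p : ℝ) ^ 2 + 50 * p - 13) / (36 * p)) := by
  refine ⟨fun h => ?_, fun h => ?_, fun h => ?_, fun h => ?_⟩ <;>
    rw [cosecSum_two_three (Int.odd_iff.mpr (by omega)) (by omega)]
  · rw [jacobiSym_three_eq_one (by omega), ZMod.χ₄_int_one_mod_four (by omega)]
    norm_num
  · rw [jacobiSym_three_eq_neg_one (by omega), ZMod.χ₄_int_three_mod_four (by omega)]
    push_cast
    ring
  · rw [jacobiSym_three_eq_neg_one (by omega), ZMod.χ₄_int_one_mod_four (by omega)]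
    push_cast
    ring
  · rw [jacobiSym_three_eq_one (by omega), ZMod.χ₄_int_three_mod_four (by omega)]
    push_cast
    ring

/-- Evaluation of the Dedekind cosecant sum `S(2, 3, p; −1)` for primes `p ≥ 5`,
according to the residue of `p` modulo `12`. -/
theorem stmt_19 (p : ℕ) (hp : p.Prime) (hp5 : 5 ≤ p) :
    (p % 12 = 1 →
      cosecSum 2 3 (p : ℤ) (-1) = (-(p : ℝ) ^ 2 + 14 * (p : ℝ) - 13) / (36 * (p : ℝ))) ∧
    (p % 12 = 11 →
      cosecSum 2 3 (p : ℤ) (-1) = (-(p : ℝ) ^ 2 - 14 * (p : ℝ) - 13) / (36 * (p : ℝ))) ∧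
    (p % 12 = 5 →
      cosecSum 2 3 (p : ℤ) (-1) = (-(p : ℝ) ^ 2 - 50 * (p : ℝ) - 13) / (36 * (p : ℝ))) ∧
    (p % 12 = 7 →
      cosecSum 2 3 (p : ℤ) (-1) = (-(p : ℝ) ^ 2 + 50 * (p : ℝ) - 13) / (36 * (p : ℝ))) := by
  exact_mod_cast stmt_19_general p
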